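/- arXiv:2403.07806 — 3 statements merged into one kernel-verified Lean document; each statement's English description precedes it below -/
import Mathlib

section
/- Fix x̄ ∈ dom g and define H : Y → ℝ ∪ {+∞} by H(y) = h(y) − f(x̄,y). Given ȳ ∈ dom h, η_y > 0 and any vector s ∈ Y, let ȳ⁺ = prox_{η_y h}(ȳ + η_y s) and G̃_y = (ȳ⁺ − ȳ)/η_y. Then for all y ∈ Y: H(y) ≥ H(ȳ⁺) − ⟨G̃_y, y − ȳ⟩ + ⟨s − ∇_y f(x̄,ȳ), y − ȳ⁺⟩ + (η_y/2)(2 − Lη_y)‖G̃_y‖² + (μ/2)‖y − ȳ‖². -/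
/-!
Write `p` for the proximal point and `G = η⁻¹ (p - ȳ)`. Three inequalities are added up:

* optimality of `p` says that `s - G` is a subgradient of `h` at `p`
  (`IsProxPt.subgradient_ineq`);
* the Lipschitz gradient bounds `f` from below at `p` by its linearisation at `ȳ`, up to
  `L / 2 * ‖p - ȳ‖ ^ 2` (`descent_lower_bound`);
* strong concavity bounds `f y` from above by its linearisation at `ȳ`.

The rest is the identity `⟪G, y - p⟫ = ⟪G, y - ȳ⟫ - η * ‖G‖ ^ 2`.
-/

noncomputable section

open scoped RealInnerProductSpace

/-- `p` is a proximal point of `z` with stepsize `η` for the proper closed convex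
function `r` with effective domain `S` (i.e. `r = +∞` outside `S`). -/
def IsProxPt {E : Type*} [NormedAddCommGroup E] [InnerProductSpace ℝ E]
    (r : E → ℝ) (S : Set E) (η : ℝ) (z p : E) : Prop :=
  p ∈ S ∧ ∀ u ∈ S, r p + ‖p - z‖ ^ 2 / (2 * η) ≤ r u + ‖u - z‖ ^ 2 / (2 * η)

/-- First-order optimality of a proximal point: `η⁻¹ (z - p)` is a subgradient of `r` at `p`.
It follows by comparing `p` with `p + t (y - p)`, dividing by `t`, and letting `t → 0⁺`. -/
theorem IsProxPt.subgradient_ineq {E : Type*} [NormedAddCommGroup E] [InnerProductSpace ℝ E]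
    {r : E → ℝ} {S : Set E} {η : ℝ} {z p : E} (hη : 0 < η) (hr : ConvexOn ℝ S r)
    (hp : IsProxPt r S η z p) {y : E} (hy : y ∈ S) :
    r p + ⟪η⁻¹ • (z - p), y - p⟫ ≤ r y := by
  obtain ⟨hpS, hmin⟩ := hp
  have key : ∀ t ∈ Set.Ioo (0 : ℝ) 1,
      0 ≤ r y - r p + η⁻¹ * ⟪p - z, y - p⟫ + t * (η⁻¹ / 2 * ‖y - p‖ ^ 2) := by
    intro t ht
    have h1 : 0 ≤ 1 - t := by linarith [ht.2]
    have hu := hmin _ (hr.1 hpS hy h1 ht.1.le (by ring))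
    have hc := hr.2 hpS hy h1 ht.1.le (by ring)
    have he : (1 - t) • p + t • y - z = (p - z) + t • (y - p) := by module
    rw [he, norm_add_sq_real, inner_smul_right, norm_smul, mul_pow, Real.norm_eq_abs,
      sq_abs] at hu
    simp only [smul_eq_mul] at hc
    refine nonneg_of_mul_nonneg_right (a := t) ?_ ht.1
    have e1 : (‖p - z‖ ^ 2 + 2 * (t * ⟪p - z, y - p⟫) + t ^ 2 * ‖y - p‖ ^ 2) / (2 * η)
        = ‖p - z‖ ^ 2 / (2 * η)
          + t * (η⁻¹ * ⟪p - z, y - p⟫ + t * (η⁻¹ / 2 * ‖y - p‖ ^ 2)) := by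
      field_simp
      ring
    rw [e1] at hu
    linarith
  have hlim : Filter.Tendsto
      (fun t : ℝ => r y - r p + η⁻¹ * ⟪p - z, y - p⟫ + t * (η⁻¹ / 2 * ‖y - p‖ ^ 2))
      (nhdsWithin 0 (Set.Ioi 0)) (nhds (r y - r p + η⁻¹ * ⟪p - z, y - p⟫)) := by
    refine Filter.Tendsto.mono_left ?_ nhdsWithin_le_nhds
    exact Continuous.tendsto' (by fun_prop) _ _ (by simp)
  have h0 := ge_of_tendsto hlim
    (Filter.eventually_of_mem (Ioo_mem_nhdsGT one_pos) key)
  have e2 : ⟪η⁻¹ • (z - p), y - p⟫ = -(η⁻¹ * ⟪p - z, y - p⟫) := by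
    rw [real_inner_smul_left, ← neg_sub p z, inner_neg_left]
    ring
  linarith

/-- Descent lemma. The function `t ↦ f (x + t d) - t ⟪∇f x, d⟫ + L / 2 * t ^ 2 * ‖d‖ ^ 2` with
`d = y - x` has nonnegative derivative on `[0, 1]` by the Lipschitz bound, so its value at `1` is
at least its value at `0`. -/
theorem descent_lower_bound {E : Type*} [NormedAddCommGroup E] [InnerProductSpace ℝ E]
    [CompleteSpace E] {f : E → ℝ} {g : E → E} {L : ℝ} (hdiff : ∀ y, HasGradientAt f (g y) y)
    (hlip : ∀ y y', ‖g y - g y'‖ ≤ L * ‖y - y'‖) (x y : E) :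
    f x + ⟪g x, y - x⟫ - L / 2 * ‖y - x‖ ^ 2 ≤ f y := by
  set d := y - x with hd
  have hder : ∀ t : ℝ, HasDerivAt
      (fun t : ℝ => f (x + t • d) - t * ⟪g x, d⟫ + L / 2 * ‖d‖ ^ 2 * t ^ 2)
      (⟪g (x + t • d), d⟫ - ⟪g x, d⟫ + L / 2 * ‖d‖ ^ 2 * (2 * t)) t := by
    intro t
    have hline : HasDerivAt (fun t : ℝ => x + t • d) d t := by
      simpa using ((hasDerivAt_id t).smul_const d).const_add x
    have h1 : HasDerivAt (fun t : ℝ => f (x + t • d)) ⟪g (x + t • d), d⟫ t := by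
      simpa [Function.comp_def] using
        (hdiff (x + t • d)).hasFDerivAt.comp_hasDerivAt t hline
    have h2 : HasDerivAt (fun t : ℝ => t * ⟪g x, d⟫) ⟪g x, d⟫ t := by
      simpa using (hasDerivAt_id t).mul_const ⟪g x, d⟫
    have h3 : HasDerivAt (fun t : ℝ => L / 2 * ‖d‖ ^ 2 * t ^ 2)
        (L / 2 * ‖d‖ ^ 2 * (2 * t)) t := by
      simpa using (hasDerivAt_pow 2 t).const_mul (L / 2 * ‖d‖ ^ 2)
    exact (h1.sub h2).add h3
  have hmono : MonotoneOn
      (fun t : ℝ => f (x + t • d) - t * ⟪g x, d⟫ + L / 2 * ‖d‖ ^ 2 * t ^ 2) (Set.Icc 0 1) := by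
    refine monotoneOn_of_deriv_nonneg (convex_Icc 0 1)
      (fun t _ => (hder t).continuousAt.continuousWithinAt)
      (fun t _ => (hder t).differentiableAt.differentiableWithinAt) fun t ht => ?_
    rw [interior_Icc] at ht
    rw [(hder t).deriv, ← inner_sub_left]
    have hb := hlip (x + t • d) x
    rw [add_sub_cancel_left, norm_smul, Real.norm_eq_abs, abs_of_pos ht.1] at hb
    have hcs := neg_le_of_abs_le (abs_real_inner_le_norm (g (x + t • d) - g x) d)
    have hm := mul_le_mul_of_nonneg_right hb (norm_nonneg d)
    linarith
  have h01 := hmono (Set.left_mem_Icc.2 zero_le_one) (Set.right_mem_Icc.2 zero_le_one)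
    zero_le_one
  have hxy : x + d = y := by simp [hd]
  simp only [zero_smul, add_zero, one_smul, hxy] at h01
  linarith

/-- **Key inequality for the dual ascent step (Theorem `thm_H`).**
Fix `x̄ ∈ dom g` and let `H(y) = h(y) − f(x̄,y)` (here `fy = f(x̄,·)` is differentiable
with `L`-Lipschitz gradient and `μ`-strongly concave, `μ ≥ 0`).  Given `ȳ ∈ dom h`,
`η_y > 0` and any vector `s`, with `ȳ⁺ = prox_{η_y h}(ȳ + η_y s)` and
`G̃_y = (ȳ⁺ − ȳ)/η_y`, for every `y ∈ dom h`:
`H(y) ≥ H(ȳ⁺) − ⟨G̃_y, y − ȳ⟩ + ⟨s − ∇_y f(x̄,ȳ), y − ȳ⁺⟩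
        + (η_y/2)(2 − Lη_y)‖G̃_y‖² + (μ/2)‖y − ȳ‖²`. -/
theorem dual_three_point_inequality
    {Y : Type*} [NormedAddCommGroup Y] [InnerProductSpace ℝ Y] [FiniteDimensional ℝ Y]
    (h : Y → ℝ) (Sh : Set Y)
    (hSh_cl : IsClosed Sh) (hSh_ne : Sh.Nonempty) (hh_cvx : ConvexOn ℝ Sh h)
    (fy : Y → ℝ) (gradfy : Y → Y) (L μ : ℝ) (hL : 0 ≤ L) (hμ : 0 ≤ μ)
    (hdiff : ∀ y, HasGradientAt fy (gradfy y) y)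
    (hlip : ∀ y y', ‖gradfy y - gradfy y'‖ ≤ L * ‖y - y'‖)
    (hconc : ∀ y y', fy y' ≤ fy y + ⟪gradfy y, y' - y⟫ - μ / 2 * ‖y' - y‖ ^ 2)
    (ηy : ℝ) (hηy : 0 < ηy)
    (proxh : Y → Y) (hproxh : ∀ z, IsProxPt h Sh ηy z (proxh z))
    (yb : Y) (hyb : yb ∈ Sh) (s : Y) :
    ∀ y ∈ Sh,
      (h (proxh (yb + ηy • s)) - fy (proxh (yb + ηy • s)))
        - ⟪ηy⁻¹ • (proxh (yb + ηy • s) - yb), y - yb⟫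
        + ⟪s - gradfy yb, y - proxh (yb + ηy • s)⟫
        + ηy / 2 * (2 - L * ηy) * ‖ηy⁻¹ • (proxh (yb + ηy • s) - yb)‖ ^ 2
        + μ / 2 * ‖y - yb‖ ^ 2
      ≤ h y - fy y := by
  intro y hy
  have hprox := (hproxh (yb + ηy • s)).subgradient_ineq hηy hh_cvx hy
  set p := proxh (yb + ηy • s)
  have hdesc := descent_lower_bound hdiff hlip yb p
  have hc := hconc yb y
  set G := ηy⁻¹ • (p - yb) with hG
  have hpG : p - yb = ηy • G := by rw [hG, smul_inv_smul₀ hηy.ne']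
  have hsub : ηy⁻¹ • (yb + ηy • s - p) = s - G := by
    rw [show yb + ηy • s - p = ηy • s - (p - yb) by abel, smul_sub, inv_smul_smul₀ hηy.ne']
  have hyp : y - p = (y - yb) - ηy • G := by rw [← hpG]; abel
  rw [hsub] at hprox
  rw [hpG, norm_smul, mul_pow, Real.norm_eq_abs, sq_abs] at hdesc
  rw [hyp] at hprox ⊢
  simp only [inner_sub_left, inner_sub_right, inner_smul_right,
    real_inner_self_eq_norm_sq] at hprox hdesc hc ⊢
  linarith
end
end

section
/- Suppose g and h are proper closed convex functions, f is differentiable on an open set containing dom g × dom h with L-Lipschitz gradient ∇f, and (x,y) ∈ dom g × dom h satisfies ‖G(x,y)‖ ≤ ε for some stepsizes η_x, η_y > 0 (ε-stationarity in the gradient-map metric M2). Set x̂ = prox_{η_x g}(x − η_x ∇_x f(x,y)) and ŷ = prox_{η_y h}(y + η_y ∇_y f(x,y)). Then there exist vectors u ∈ ∇_x f(x̂,ŷ) + ∂g(x̂) and v ∈ ∇_y f(x̂,ŷ) − ∂h(ŷ) such that ‖u‖ ≤ (1 + (η_x + η_y)L)·ε and ‖v‖ ≤ (1 + (η_x + η_y)L)·ε,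 i.e., (x̂,ŷ) is (ε_x,ε_y)-stationary in the subdifferential metric M4 with ε_x = ε_y = (1 + (η_x + η_y)L)ε. -/
/-!
The optimality condition of the proximal subproblem says that `(z - prox z) / η` is a subgradient at
`prox z` (`IsProxPt.subgradAt`). For the two proximal steps this yields the subgradients
`G_x - ∇_x f(x, y)` at `x̂` and `∇_y f(x, y) - G_y` at `ŷ`. The residuals are therefore `G_x` and
`G_y`, each perturbed by the change of `∇f` between `(x, y)` and `(x̂, ŷ)`. Since `x - x̂ = η_x G_x`
and `ŷ - y = η_y G_y`, the Lipschitz bound makes that change at most `(η_x + η_y) L ε`.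
-/

noncomputable section

open scoped RealInnerProductSpace

/-- `u` is a (convex) subgradient at `x` of the proper closed convex function `r`
with effective domain `S`. -/
def SubgradAt {E : Type*} [NormedAddCommGroup E] [InnerProductSpace ℝ E]
    (r : E → ℝ) (S : Set E) (x u : E) : Prop :=
  x ∈ S ∧ ∀ z ∈ S, r x + ⟪u, z - x⟫ ≤ r z

/-- Fermat's rule for the proximal subproblem: the scaled displacement is a subgradient at the
proximal point. It follows by comparing `p` with `p + t (w - p)` and letting `t → 0`. -/
theorem IsProxPt.subgradAt {E : Type*} [NormedAddCommGroup E] [InnerProductSpace ℝ E]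
    {r : E → ℝ} {S : Set E} {η : ℝ} {z p : E} (hr : ConvexOn ℝ S r) (hη : 0 < η)
    (hp : IsProxPt r S η z p) : SubgradAt r S p (η⁻¹ • (z - p)) := by
  obtain ⟨hpS, hmin⟩ := hp
  refine ⟨hpS, fun w hw => ?_⟩
  have key : ∀ t : ℝ, 0 < t → t ≤ 1 →
      0 ≤ (r w - r p - ⟪η⁻¹ • (z - p), w - p⟫) + t * (‖w - p‖ ^ 2 / (2 * η)) := by
    intro t ht ht1
    have hmem := hr.1 hpS hw (sub_nonneg.2 ht1) ht.le (by ring)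
    have hc := hr.2 hpS hw (sub_nonneg.2 ht1) ht.le (by ring)
    have hm := hmin _ hmem
    have e : ((1 - t) • p + t • w) - z = t • (w - p) - (z - p) := by module
    rw [e, norm_sub_rev p z, norm_sub_sq_real (t • (w - p)), norm_smul, inner_smul_left,
      real_inner_comm (z - p) (w - p)] at hm
    simp only [smul_eq_mul, Real.norm_eq_abs, abs_of_pos ht, conj_trivial] at hm hc
    rw [inner_smul_left]
    simp only [conj_trivial]
    generalize ‖w - p‖ = a at *
    generalize ‖z - p‖ = b at *
    generalize ⟪z - p, w - p⟫ = c at *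
    have h1 : 0 ≤ t * ((r w - r p - η⁻¹ * c) + t * (a ^ 2 / (2 * η))) := by
      have e2 : ((t * a) ^ 2 - 2 * (t * c) + b ^ 2) / (2 * η)
          = t * (t * (a ^ 2 / (2 * η))) - t * (η⁻¹ * c) + b ^ 2 / (2 * η) := by
        field_simp
      rw [e2] at hm
      linarith
    exact nonneg_of_mul_nonneg_right h1 ht
  have hlim : Filter.Tendsto
      (fun t : ℝ => (r w - r p - ⟪η⁻¹ • (z - p), w - p⟫) + t * (‖w - p‖ ^ 2 / (2 * η)))
      (nhdsWithin 0 (Set.Ioi 0)) (nhds (r w - r p - ⟪η⁻¹ • (z - p), w - p⟫)) := by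
    have hcont : Continuous
        (fun t : ℝ => (r w - r p - ⟪η⁻¹ • (z - p), w - p⟫) + t * (‖w - p‖ ^ 2 / (2 * η))) := by
      fun_prop
    simpa using (hcont.tendsto 0).mono_left nhdsWithin_le_nhds
  have := ge_of_tendsto hlim (by
    filter_upwards [Ioc_mem_nhdsGT (zero_lt_one (α := ℝ))] with t ht using key t ht.1 ht.2)
  linarith

/-- **From the gradient-map metric (M2) to the subdifferential metric (M4).**
If `(x,y) ∈ dom g × dom h` satisfies `‖G(x,y)‖ ≤ ε` for the gradient map with
stepsizes `η_x, η_y > 0`, and `∇f` is `L`-Lipschitz on `dom g × dom h`, then with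
`x̂ = prox_{η_x g}(x − η_x∇_x f(x,y))` and `ŷ = prox_{η_y h}(y + η_y∇_y f(x,y))`,
there are `u ∈ ∇_x f(x̂,ŷ) + ∂g(x̂)` and `v ∈ ∇_y f(x̂,ŷ) − ∂h(ŷ)` with
`‖u‖, ‖v‖ ≤ (1 + (η_x + η_y)L)·ε`. -/
theorem M2_to_M4
    {X : Type*} [NormedAddCommGroup X] [InnerProductSpace ℝ X] [FiniteDimensional ℝ X]
    {Y : Type*} [NormedAddCommGroup Y] [InnerProductSpace ℝ Y] [FiniteDimensional ℝ Y]
    (g : X → ℝ) (Sg : Set X)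
    (hSg_cl : IsClosed Sg) (hSg_ne : Sg.Nonempty) (hg_cvx : ConvexOn ℝ Sg g)
    (h : Y → ℝ) (Sh : Set Y)
    (hSh_cl : IsClosed Sh) (hSh_ne : Sh.Nonempty) (hh_cvx : ConvexOn ℝ Sh h)
    (f : X → Y → ℝ) (gradx : X → Y → X) (grady : X → Y → Y) (L : ℝ) (hL : 0 ≤ L)
    (hdiffx : ∀ x y, x ∈ Sg → y ∈ Sh → HasGradientAt (fun x' => f x' y) (gradx x y) x)
    (hdiffy : ∀ x y, x ∈ Sg → y ∈ Sh → HasGradientAt (f x) (grady x y) y)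
    (hlip : ∀ x x' y y', x ∈ Sg → x' ∈ Sg → y ∈ Sh → y' ∈ Sh →
      ‖gradx x y - gradx x' y'‖ ^ 2 + ‖grady x y - grady x' y'‖ ^ 2
        ≤ L ^ 2 * (‖x - x'‖ ^ 2 + ‖y - y'‖ ^ 2))
    (ηx ηy : ℝ) (hηx : 0 < ηx) (hηy : 0 < ηy)
    (proxg : X → X) (hproxg : ∀ z, IsProxPt g Sg ηx z (proxg z))
    (proxh : Y → Y) (hproxh : ∀ z, IsProxPt h Sh ηy z (proxh z))
    (ε : ℝ) (hε : 0 ≤ ε)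
    (x : X) (y : Y) (hx : x ∈ Sg) (hy : y ∈ Sh)
    (hstat : Real.sqrt (‖ηx⁻¹ • (x - proxg (x - ηx • gradx x y))‖ ^ 2
        + ‖ηy⁻¹ • (proxh (y + ηy • grady x y) - y)‖ ^ 2) ≤ ε) :
    ∃ ug vh,
      SubgradAt g Sg (proxg (x - ηx • gradx x y)) ug ∧
      SubgradAt h Sh (proxh (y + ηy • grady x y)) vh ∧
      ‖gradx (proxg (x - ηx • gradx x y)) (proxh (y + ηy • grady x y)) + ug‖
        ≤ (1 + (ηx + ηy) * L) * ε ∧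
      ‖grady (proxg (x - ηx • gradx x y)) (proxh (y + ηy • grady x y)) - vh‖
        ≤ (1 + (ηx + ηy) * L) * ε := by
  have hp := (hproxg (x - ηx • gradx x y)).subgradAt hg_cvx hηx
  have hq := (hproxh (y + ηy • grady x y)).subgradAt hh_cvx hηy
  set p := proxg (x - ηx • gradx x y)
  set q := proxh (y + ηy • grady x y)
  have hl := hlip p x q y hp.1 hx hq.1 hy
  have hG := (Real.sqrt_le_left hε).1 hstat
  have hxp : ‖p - x‖ = ηx * ‖ηx⁻¹ • (x - p)‖ := by
    rw [norm_smul, norm_inv, Real.norm_of_nonneg hηx.le, mul_inv_cancel_left₀ hηx.ne',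
      norm_sub_rev]
  have hyq : ‖q - y‖ = ηy * ‖ηy⁻¹ • (q - y)‖ := by
    rw [norm_smul, norm_inv, Real.norm_of_nonneg hηy.le, mul_inv_cancel_left₀ hηy.ne']
  have eu : gradx p q + ηx⁻¹ • (x - ηx • gradx x y - p)
      = (gradx p q - gradx x y) + ηx⁻¹ • (x - p) := by
    match_scalars <;> field_simp
  have ev : grady p q - ηy⁻¹ • (y + ηy • grady x y - q)
      = (grady p q - grady x y) + ηy⁻¹ • (q - y) := by
    match_scalars <;> field_simp
  refine ⟨_, _, hp, hq, ?_⟩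
  rw [eu, ev]
  rw [hxp, hyq] at hl
  have ha := norm_add_le (gradx p q - gradx x y) (ηx⁻¹ • (x - p))
  have hb := norm_add_le (grady p q - grady x y) (ηy⁻¹ • (q - y))
  have hGx : ‖ηx⁻¹ • (x - p)‖ ≤ ε :=
    (sq_le_sq₀ (norm_nonneg _) hε).1 (by nlinarith [sq_nonneg ‖ηy⁻¹ • (q - y)‖])
  have hGy : ‖ηy⁻¹ • (q - y)‖ ≤ ε :=
    (sq_le_sq₀ (norm_nonneg _) hε).1 (by nlinarith [sq_nonneg ‖ηx⁻¹ • (x - p)‖])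
  have hGx2 : (ηx * ‖ηx⁻¹ • (x - p)‖) ^ 2 ≤ (ηx * ε) ^ 2 := by gcongr
  have hGy2 : (ηy * ‖ηy⁻¹ • (q - y)‖) ^ 2 ≤ (ηy * ε) ^ 2 := by gcongr
  have hsum : (ηx * ‖ηx⁻¹ • (x - p)‖) ^ 2 + (ηy * ‖ηy⁻¹ • (q - y)‖) ^ 2
      ≤ ((ηx + ηy) * ε) ^ 2 := by
    have : 0 ≤ (ηx * ε) * (ηy * ε) := by positivity
    nlinarith
  have hbd := hl.trans (mul_le_mul_of_nonneg_left hsum (sq_nonneg L))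
  have hpos : 0 ≤ (ηx + ηy) * L * ε := by positivity
  have hdx : ‖gradx p q - gradx x y‖ ≤ (ηx + ηy) * L * ε :=
    (sq_le_sq₀ (norm_nonneg _) hpos).1 (by nlinarith [sq_nonneg ‖grady p q - grady x y‖])
  have hdy : ‖grady p q - grady x y‖ ≤ (ηx + ηy) * L * ε :=
    (sq_le_sq₀ (norm_nonneg _) hpos).1 (by nlinarith [sq_nonneg ‖gradx p q - gradx x y‖])
  constructor <;> linarith
end
end

section
/- Let (x,y) ∈ dom g × dom h, η_y > 0 and any vector s ∈ Y, and set G̃_y = (prox_{η_y h}(y + η_y s) − y)/η_y. Then (1/4)‖G̃_y‖² ≤ ‖s − ∇_y f(x,y)‖² + (L² + 3/(2η_y²))·‖y_*(x) − y‖². -/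
/-!
Write `p = prox (y + η s)` and let `a = ystar = prox (a + η ∇f(a))`. The proximal map of a convex
function is nonexpansive (`IsProxPt.norm_sub_le`), and since `∇f` is monotone decreasing and
`L`-Lipschitz, `‖(y - a) + η (∇f(y) - ∇f(a))‖² ≤ (1 + η² L²) ‖y - a‖²`. Hence
`‖p - y‖ ≤ η ‖s - ∇f(y)‖ + M + ‖y - a‖` with `M² ≤ (1 + η² L²) ‖y - a‖²`, and the weighted
Cauchy-Schwarz inequality `(E + M + D)² ≤ 4 E² + 4 M² + 2 D²` (as `1/4 + 1/4 + 1/2 = 1`) gives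
exactly the stated constants.
-/

noncomputable section

open scoped RealInnerProductSpace

/-- First-order optimality of a proximal point: `(z - p) / η` is a subgradient of `r` at `p`. It is
obtained by comparing `p` with `p + t (u - p)` and letting `t → 0`. -/
theorem IsProxPt.subgradient {E : Type*} [NormedAddCommGroup E] [InnerProductSpace ℝ E]
    {r : E → ℝ} {S : Set E} {η : ℝ} (hη : 0 < η) (hr : ConvexOn ℝ S r) {z p : E}
    (hp : IsProxPt r S η z p) {u : E} (hu : u ∈ S) :
    ⟪z - p, u - p⟫ ≤ η * (r u - r p) := by
  obtain ⟨hpS, hmin⟩ := hp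
  have key : ∀ t : ℝ, 0 < t → t < 1 →
      ⟪z - p, u - p⟫ - η * (r u - r p) ≤ t * (‖u - p‖ ^ 2 / 2) := by
    intro t ht ht1
    have h1 := hmin _ (hr.1 hpS hu (sub_nonneg.2 ht1.le) ht.le (by ring))
    have h2 := hr.2 hpS hu (sub_nonneg.2 ht1.le) ht.le (by ring)
    have e1 : (1 - t) • p + t • u - z = (p - z) + t • (u - p) := by module
    rw [e1, norm_add_sq_real, inner_smul_right, norm_smul, mul_pow, Real.norm_eq_abs,
      sq_abs] at h1
    simp only [smul_eq_mul] at h2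
    have e2 : ⟪z - p, u - p⟫ = -⟪p - z, u - p⟫ := by rw [← inner_neg_left, neg_sub]
    rw [e2]
    have h3 : r p + ‖p - z‖ ^ 2 / (2 * η) ≤ (1 - t) * r p + t * r u +
        (‖p - z‖ ^ 2 + 2 * (t * ⟪p - z, u - p⟫) + t ^ 2 * ‖u - p‖ ^ 2) / (2 * η) := by
      linarith
    have h4 := mul_le_mul_of_nonneg_left h3 hη.le
    have e3 : ∀ x : ℝ, η * (x / (2 * η)) = x / 2 := by intro x; field_simp
    rw [mul_add, e3, mul_add, e3] at h4
    refine le_of_mul_le_mul_left ?_ ht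
    nlinarith
  have hlim : Filter.Tendsto (fun t : ℝ => t * (‖u - p‖ ^ 2 / 2)) (nhdsWithin 0 (Set.Ioi 0))
      (nhds 0) := by
    have : Filter.Tendsto (fun t : ℝ => t * (‖u - p‖ ^ 2 / 2)) (nhds 0)
        (nhds (0 * (‖u - p‖ ^ 2 / 2))) := by
      apply Continuous.tendsto
      fun_prop
    rw [zero_mul] at this
    exact this.mono_left nhdsWithin_le_nhds
  have := ge_of_tendsto hlim (by
    filter_upwards [Ioo_mem_nhdsGT (zero_lt_one' ℝ)] with t ht using key t ht.1 ht.2)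
  linarith

/-- Nonexpansiveness of the proximal map. -/
theorem IsProxPt.norm_sub_le {E : Type*} [NormedAddCommGroup E] [InnerProductSpace ℝ E]
    {r : E → ℝ} {S : Set E} {η : ℝ} (hη : 0 < η) (hr : ConvexOn ℝ S r) {z z' p p' : E}
    (hp : IsProxPt r S η z p) (hp' : IsProxPt r S η z' p') :
    ‖p - p'‖ ≤ ‖z - z'‖ := by
  have h1 := hp.subgradient hη hr hp'.1
  have h2 := hp'.subgradient hη hr hp.1
  have e1 : ⟪z - p, p' - p⟫ + ⟪z' - p', p - p'⟫ = ‖p - p'‖ ^ 2 - ⟪z - z', p - p'⟫ := by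
    have : p' - p = -(p - p') := by abel
    rw [this, inner_neg_right, ← real_inner_self_eq_norm_sq, ← sub_eq_zero]
    simp only [inner_sub_left]
    ring
  have h3 := real_inner_le_norm (z - z') (p - p')
  rcases (norm_nonneg (p - p')).eq_or_lt with h0 | h0
  · rw [← h0]; positivity
  · refine le_of_mul_le_mul_right ?_ h0
    nlinarith

/-- **Bound on the dual stochastic gradient map via the dual error.**
For `(x,y) ∈ dom g × dom h`, `η_y > 0` and any vector `s`, with
`G̃_y = (prox_{η_y h}(y + η_y s) − y)/η_y`, one has
`(1/4)‖G̃_y‖² ≤ ‖s − ∇_y f(x,y)‖² + (L² + 3/(2η_y²))·‖y_*(x) − y‖²`.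
Here `fy = f(x,·)` is differentiable and concave with `L`-Lipschitz gradient, and
`y_*(x)` is a maximizer of `y ↦ f(x,y) − h(y)`, hence a fixed point of the
proximal-gradient ascent step. -/
theorem dual_gradmap_bound
    {Y : Type*} [NormedAddCommGroup Y] [InnerProductSpace ℝ Y] [FiniteDimensional ℝ Y]
    (h : Y → ℝ) (Sh : Set Y)
    (hSh_cl : IsClosed Sh) (hSh_ne : Sh.Nonempty) (hh_cvx : ConvexOn ℝ Sh h)
    (fy : Y → ℝ) (gradfy : Y → Y) (L : ℝ) (hL : 0 ≤ L)
    (hdiff : ∀ y, HasGradientAt fy (gradfy y) y)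
    (hlip : ∀ y y', ‖gradfy y - gradfy y'‖ ≤ L * ‖y - y'‖)
    (hconc : ∀ y y', ⟪gradfy y - gradfy y', y - y'⟫ ≤ 0)
    (ηy : ℝ) (hηy : 0 < ηy)
    (proxh : Y → Y) (hproxh : ∀ z, IsProxPt h Sh ηy z (proxh z))
    (ystar : Y) (hystar_mem : ystar ∈ Sh)
    (hystar_max : ∀ y ∈ Sh, fy y - h y ≤ fy ystar - h ystar)
    (hfix : ystar = proxh (ystar + ηy • gradfy ystar))
    (y : Y) (hy : y ∈ Sh) (s : Y) :
    (1 / 4) * ‖ηy⁻¹ • (proxh (y + ηy • s) - y)‖ ^ 2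
      ≤ ‖s - gradfy y‖ ^ 2 + (L ^ 2 + 3 / (2 * ηy ^ 2)) * ‖ystar - y‖ ^ 2 := by
  set p := proxh (y + ηy • s) with hp
  have hstar : IsProxPt h Sh ηy (ystar + ηy • gradfy ystar) ystar := by
    have := hproxh (ystar + ηy • gradfy ystar)
    rwa [← hfix] at this
  have hne : ‖p - ystar‖ ≤ ‖(y + ηy • s) - (ystar + ηy • gradfy ystar)‖ :=
    (hproxh (y + ηy • s)).norm_sub_le hηy hh_cvx hstar
  set d := y - ystar with hd
  set Δ := gradfy y - gradfy ystar with hΔ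
  have hsplit : (y + ηy • s) - (ystar + ηy • gradfy ystar)
      = ηy • (s - gradfy y) + (d + ηy • Δ) := by
    rw [hd, hΔ]; module
  have htri : ‖p - y‖ ≤ ηy * ‖s - gradfy y‖ + ‖d + ηy • Δ‖ + ‖d‖ := by
    have h1 : p - y = (p - ystar) - d := by rw [hd]; abel
    have h2 := norm_sub_le (p - ystar) d
    have h3 := norm_add_le (ηy • (s - gradfy y)) (d + ηy • Δ)
    rw [norm_smul, Real.norm_of_nonneg hηy.le] at h3
    rw [hsplit] at hne
    rw [h1]
    linarith
  have hM : ‖d + ηy • Δ‖ ^ 2 ≤ (1 + ηy ^ 2 * L ^ 2) * ‖d‖ ^ 2 := by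
    have hin : ⟪d, Δ⟫ ≤ 0 := by rw [real_inner_comm]; exact hconc y ystar
    have hΔd : ‖Δ‖ ^ 2 ≤ L ^ 2 * ‖d‖ ^ 2 := by
      rw [← mul_pow]
      exact pow_le_pow_left₀ (norm_nonneg _) (hlip y ystar) 2
    rw [norm_add_sq_real, inner_smul_right, norm_smul, mul_pow, Real.norm_of_nonneg hηy.le]
    have h1 := mul_nonpos_of_nonneg_of_nonpos hηy.le hin
    have h2 := mul_le_mul_of_nonneg_left hΔd (sq_nonneg ηy)
    linarith
  have hsq : ‖p - y‖ ^ 2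
      ≤ 4 * (ηy * ‖s - gradfy y‖) ^ 2 + (4 * (ηy ^ 2 * L ^ 2) + 6) * ‖d‖ ^ 2 := by
    have h1 := pow_le_pow_left₀ (norm_nonneg _) htri 2
    -- `4E² + 4M² + 2D² - (E + M + D)² = 2 (E - M)² + (E + M - D)²`
    nlinarith [sq_nonneg (ηy * ‖s - gradfy y‖ - ‖d + ηy • Δ‖),
      sq_nonneg (ηy * ‖s - gradfy y‖ + ‖d + ηy • Δ‖ - ‖d‖)]
  have hd' : ‖ystar - y‖ = ‖d‖ := norm_sub_rev _ _
  rw [hd', norm_smul, norm_inv, Real.norm_of_nonneg hηy.le, mul_pow]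
  calc (1 / 4) * (ηy⁻¹ ^ 2 * ‖p - y‖ ^ 2)
      ≤ (1 / 4) * (ηy⁻¹ ^ 2 *
          (4 * (ηy * ‖s - gradfy y‖) ^ 2 + (4 * (ηy ^ 2 * L ^ 2) + 6) * ‖d‖ ^ 2)) := by
        gcongr
    _ = ‖s - gradfy y‖ ^ 2 + (L ^ 2 + 3 / (2 * ηy ^ 2)) * ‖d‖ ^ 2 := by
        field_simp
        ring
end
end
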